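/- Let N ≥ 1 and let (f̂_k)_{k≥0} be a sequence of continuously differentiable functions f̂_k : ℝ^N → ℝ, each with L-Lipschitz gradient and satisfying the PL inequality with constant μ > 0, with nonempty minimiser sets X*_k and minimum values f̂*_k satisfying 0 ≤ f̂*_k ≤ M for all k and some M. Suppose |f̂_{k+1}(x) − f̂_k(x)| ≤ η₀ for all x and all k, and |f̂*_k − f̂*_{k+1}| ≤ η* for all k, with η₀, η* > 0. Fix α ∈ (0, 1/L], c > 1/μ, μ' = μ − 1/c, error vectors (ε_k) with f̂_k(x_k) ≥ (c/2)‖ε_k‖² for all k, and iterates x_{k+1} = x_k − α(∇f̂_k(x_k) + ε_k) from an initial point x₀. Then limsup_{k→∞} (1/2)·d(x_{k+1}, X*_{k+1})² ≤ (limsup_{k→∞} f̂*_k)/μ' + (η₀ + η*)/(α μ μ'). -/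

import Mathlib

open scoped RealInnerProductSpace

theorem descent_aux {N : ℕ} (f : EuclideanSpace ℝ (Fin N) → ℝ) (L : ℝ)
    (hd : ContDiff ℝ 1 f)
    (hLip : ∀ x y, ‖gradient f x - gradient f y‖ ≤ L * ‖x - y‖)
    (x v : EuclideanSpace ℝ (Fin N)) :
    f (x + v) ≤ f x + ⟪gradient f x, v⟫ + L / 2 * ‖v‖ ^ 2 := by
  have hdf : Differentiable ℝ f := hd.differentiable (by norm_num)
  have hderiv : ∀ t : ℝ, HasDerivAt
      (fun t : ℝ => f (x + t • v) - t * ⟪gradient f x, v⟫ - L / 2 * ‖v‖ ^ 2 * t ^ 2)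
      (⟪gradient f (x + t • v), v⟫ - ⟪gradient f x, v⟫ - L * ‖v‖ ^ 2 * t) t := by
    intro t
    have h1 : HasFDerivAt f (InnerProductSpace.toDual ℝ _ (gradient f (x + t • v))) (x + t • v) :=
      (hdf (x + t • v)).hasGradientAt.hasFDerivAt
    have h2 : HasDerivAt (fun t : ℝ => x + t • v) v t := by
      simpa using ((hasDerivAt_id t).smul_const v).const_add x
    have h3 := h1.comp_hasDerivAt t h2
    have h4 : HasDerivAt (fun t : ℝ => t * ⟪gradient f x, v⟫) ⟪gradient f x, v⟫ t := by
      simpa using (hasDerivAt_id t).mul_const ⟪gradient f x, v⟫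
    have h5 : HasDerivAt (fun t : ℝ => L / 2 * ‖v‖ ^ 2 * t ^ 2) (L * ‖v‖ ^ 2 * t) t := by
      have := (hasDerivAt_pow 2 t).const_mul (L / 2 * ‖v‖ ^ 2)
      exact this.congr_deriv (by norm_num; ring)
    have h6 := (h3.sub h4).sub h5
    exact h6
  have hanti : AntitoneOn
      (fun t : ℝ => f (x + t • v) - t * ⟪gradient f x, v⟫ - L / 2 * ‖v‖ ^ 2 * t ^ 2)
      (Set.Icc (0 : ℝ) 1) := by
    apply antitoneOn_of_deriv_nonpos (convex_Icc 0 1)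
    · exact fun t _ => (hderiv t).continuousAt.continuousWithinAt
    · exact fun t _ => (hderiv t).differentiableAt.differentiableWithinAt
    · intro t ht
      rw [interior_Icc] at ht
      rw [(hderiv t).deriv, ← inner_sub_left]
      have h1 := real_inner_le_norm (gradient f (x + t • v) - gradient f x) v
      have h2 := hLip (x + t • v) x
      have h3 : ‖x + t • v - x‖ = t * ‖v‖ := by
        rw [add_sub_cancel_left, norm_smul, Real.norm_of_nonneg ht.1.le]
      rw [h3] at h2
      have h4 := mul_le_mul_of_nonneg_right h2 (norm_nonneg v)
      nlinarith
  have h := hanti (show (0 : ℝ) ∈ Set.Icc (0 : ℝ) 1 by simp)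
    (show (1 : ℝ) ∈ Set.Icc (0 : ℝ) 1 by simp) zero_le_one
  simp only [one_smul, zero_smul, add_zero, one_mul, zero_mul, sub_zero, one_pow, mul_one, ne_eq,
    OfNat.ofNat_ne_zero, not_false_eq_true, zero_pow, mul_zero] at h
  linarith

theorem qg_aux {N : ℕ} (f : EuclideanSpace ℝ (Fin N) → ℝ) (L μ fs : ℝ) (hL : 0 < L) (hμ : 0 < μ)
    (hd : ContDiff ℝ 1 f)
    (hLip : ∀ x y, ‖gradient f x - gradient f y‖ ≤ L * ‖x - y‖)
    (hlb : ∀ x, fs ≤ f x)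
    (hPL : ∀ x, μ * (f x - fs) ≤ (1/2) * ‖gradient f x‖^2)
    (x : EuclideanSpace ℝ (Fin N)) :
    μ * ((1/2) * (Metric.infDist x {y | f y = fs}) ^ 2) ≤ f x - fs := by
  set D := Metric.infDist x {y | f y = fs} with hD
  have hD0 : 0 ≤ D := Metric.infDist_nonneg
  have key : ∀ l : ℝ, 0 < l → l ^ 2 < μ / 2 → l * D ≤ √(f x - fs) := by
    intro l hl hl2
    have hcont : Continuous (fun y => √(f y - fs) + l * dist y x) := by
      have := hd.continuous
      fun_prop
    have hlim : Filter.Tendsto (fun y => √(f y - fs) + l * dist y x)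
        (Filter.cocompact _) Filter.atTop := by
      have h1 := (tendsto_dist_right_cocompact_atTop x).const_mul_atTop hl
      exact Filter.tendsto_atTop_mono (fun y => by
        have := Real.sqrt_nonneg (f y - fs)
        linarith) h1
    obtain ⟨y, hy⟩ := hcont.exists_forall_le hlim
    have hz : ∀ z, √(f y - fs) ≤ √(f z - fs) + l * ‖z - y‖ := by
      intro z
      have h1 := hy z
      have h2 := dist_triangle z y x
      rw [dist_eq_norm z y] at h2
      nlinarith
    have hyfs : f y = fs := by
      by_contra hne
      have hpos : 0 < f y - fs := sub_pos.2 (lt_of_le_of_ne (hlb y) (Ne.symm hne))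
      set s := √(f y - fs) with hs
      have hs0 : 0 < s := Real.sqrt_pos.2 hpos
      have hss : s ^ 2 = f y - fs := Real.sq_sqrt hpos.le
      have hlow : ∀ z, f y - 2 * l * s * ‖z - y‖ ≤ f z := by
        intro z
        have h1 := hz z
        have h2 : √(f z - fs) ^ 2 = f z - fs := Real.sq_sqrt (sub_nonneg.2 (hlb z))
        have h3 := Real.sqrt_nonneg (f z - fs)
        have h4 : 0 ≤ l * ‖z - y‖ := by positivity
        set w := √(f z - fs)
        set r := l * ‖z - y‖
        have : s ^ 2 - 2 * s * r ≤ w ^ 2 := by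
          by_cases hc : s ≤ r
          · nlinarith
          · push Not at hc
            nlinarith
        have e : 2 * l * s * ‖z - y‖ = 2 * s * r := by simp only [r]; ring
        linarith
      set G := ‖gradient f y‖ with hG
      have hPLy := hPL y
      have hG0 : 0 < G := by
        have : 0 < μ * (f y - fs) := mul_pos hμ hpos
        have h0 : 0 ≤ G := norm_nonneg _
        rcases h0.eq_or_lt with h | h
        · rw [← hG, ← h] at hPLy
          norm_num at hPLy
          linarith
        · exact h
      have hGle : G ≤ 2 * l * s := by
        apply le_of_forall_pos_le_add
        intro e he
        obtain ⟨t, ht, hte⟩ : ∃ t : ℝ, 0 < t ∧ L / 2 * t * G = e :=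
          ⟨e / (L / 2 * G), by positivity, by field_simp⟩
        have h1 := hlow (y + (-t) • gradient f y)
        have h2 := descent_aux f L hd hLip y ((-t) • gradient f y)
        rw [add_sub_cancel_left] at h1
        rw [inner_smul_right, real_inner_self_eq_norm_sq] at h2
        have h3 : ‖(-t) • gradient f y‖ = t * G := by
          rw [norm_smul, norm_neg, Real.norm_of_nonneg ht.le]
        rw [h3] at h1 h2
        rw [← hG] at h2
        have h4 : (t * G) * G ≤ (t * G) * (2 * l * s + L / 2 * t * G) := by nlinarith
        rw [← hte]
        exact le_of_mul_le_mul_left h4 (by positivity)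
      have h5 : G ^ 2 ≤ (2 * l * s) ^ 2 := by gcongr
      have h6 : (2 * l * s) ^ 2 = 4 * l ^ 2 * (f y - fs) := by rw [← hss]; ring
      nlinarith
    have h1 : D ≤ dist x y := Metric.infDist_le_dist_of_mem (by exact hyfs)
    have h2 := hy x
    simp only [hyfs, sub_self, Real.sqrt_zero, dist_self, mul_zero, add_zero, zero_add] at h2
    rw [dist_comm] at h1
    nlinarith
  have hA : √(μ / 2) * D ≤ √(f x - fs) := by
    have hm : 0 < √(μ / 2) := Real.sqrt_pos.2 (by positivity)
    have hmm : √(μ / 2) ^ 2 = μ / 2 := Real.sq_sqrt (by positivity)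
    have ht : Filter.Tendsto (fun l : ℝ => l * D) (nhdsWithin (√(μ / 2)) (Set.Iio (√(μ / 2))))
        (nhds (√(μ / 2) * D)) :=
      ((continuous_id.mul continuous_const).tendsto _).mono_left nhdsWithin_le_nhds
    refine le_of_tendsto ht ?_
    filter_upwards [Ioo_mem_nhdsLT hm] with l hl
    refine key l hl.1 ?_
    rw [← hmm]
    have := hl.1
    have := hl.2
    gcongr
  have h1 : (√(μ / 2) * D) ^ 2 ≤ √(f x - fs) ^ 2 := by gcongr
  rw [mul_pow, Real.sq_sqrt (by positivity), Real.sq_sqrt (sub_nonneg.2 (hlb x))] at h1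
  linarith

theorem rec_aux (D : ℕ → ℝ) (q b e : ℝ) (hq0 : 0 ≤ q) (hq1 : q < 1) (he : 0 < e)
    (h : ∀ᶠ k in Filter.atTop, D (k + 1) ≤ q * D k + b) :
    ∀ᶠ k in Filter.atTop, D k ≤ b / (1 - q) + e := by
  obtain ⟨K, hK⟩ := Filter.eventually_atTop.1 h
  set B := b / (1 - q) with hB
  have hBq : q * B + b = B := by
    have : 1 - q ≠ 0 := by linarith
    rw [hB]; field_simp; ring
  have hn : ∀ n, D (n + K) - B ≤ q ^ n * (D K - B) := by
    intro n
    induction n with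
    | zero => simp
    | succ n ih =>
      have h1 := hK (n + K) (by omega)
      have h2 := mul_le_mul_of_nonneg_left ih hq0
      rw [show n + 1 + K = n + K + 1 by ring, pow_succ]
      nlinarith
  have ht : Filter.Tendsto (fun n : ℕ => q ^ n * (D K - B)) Filter.atTop (nhds 0) := by
    simpa using (tendsto_pow_atTop_nhds_zero_of_lt_one hq0 hq1).mul_const (D K - B)
  filter_upwards [(Filter.tendsto_sub_atTop_nat K).eventually (ht.eventually (gt_mem_nhds he)),
    Filter.eventually_ge_atTop K] with n hne hnK
  have h1 := hn (n - K)
  rw [Nat.sub_add_cancel hnK] at h1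
  linarith

/-- asymptotic neighbourhood of convergence for the composite
dynamics (limit bound of Theorem 1 of the paper). -/
theorem stmt8 (N : ℕ) (hN : 1 ≤ N)
    (f : ℕ → EuclideanSpace ℝ (Fin N) → ℝ)
    (fstar : ℕ → ℝ) (L μ η₀ ηs α c M : ℝ)
    (hL : 0 < L) (hμ : 0 < μ) (hη₀ : 0 < η₀) (hηs : 0 < ηs)
    (hdiff : ∀ k, ContDiff ℝ 1 (f k))
    (hLip : ∀ k x y, ‖gradient (f k) x - gradient (f k) y‖ ≤ L * ‖x - y‖)
    (hlb : ∀ k x, fstar k ≤ f k x)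
    (hne : ∀ k, {x : EuclideanSpace ℝ (Fin N) | f k x = fstar k}.Nonempty)
    (hfstar0 : ∀ k, 0 ≤ fstar k) (hfstarM : ∀ k, fstar k ≤ M)
    (hPL : ∀ k x, μ * (f k x - fstar k) ≤ (1/2) * ‖gradient (f k) x‖^2)
    (hdrift : ∀ k x, |f (k+1) x - f k x| ≤ η₀)
    (hdrifts : ∀ k, |fstar k - fstar (k+1)| ≤ ηs)
    (hα : 0 < α) (hα' : α ≤ 1/L)
    (hc : 1/μ < c)
    (ε x : ℕ → EuclideanSpace ℝ (Fin N))
    (hx : ∀ k, x (k+1) = x k - α • (gradient (f k) (x k) + ε k))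
    (hεbound : ∀ k, (c/2) * ‖ε k‖^2 ≤ f k (x k)) :
    Filter.limsup
        (fun k => (1/2) * (Metric.infDist (x (k+1)) {y | f (k+1) y = fstar (k+1)})^2)
        Filter.atTop ≤
      (Filter.limsup fstar Filter.atTop) / (μ - 1/c) + (η₀ + ηs)/(α * μ * (μ - 1/c)) := by
  have hc0 : 0 < c := lt_trans (by positivity) hc
  have hcμ : 1 < c * μ := by rwa [div_lt_iff₀ hμ] at hc
  have hm' : 0 < μ - 1 / c := by
    rw [sub_pos, div_lt_iff₀ hc0]; linarith
  have hαL : α * L ≤ 1 := by rwa [le_div_iff₀ hL] at hα'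
  set m := μ - 1 / c with hm
  set F := Filter.limsup fstar Filter.atTop with hF
  have hbdd : Filter.IsBoundedUnder (· ≤ ·) Filter.atTop fstar :=
    Filter.isBoundedUnder_of ⟨M, hfstarM⟩
  have hF0 : 0 ≤ F :=
    Filter.le_limsup_of_frequently_le (Filter.Frequently.of_forall hfstar0) hbdd
  have hu : Filter.IsCoboundedUnder (· ≤ ·) Filter.atTop
      (fun k => (1/2) * (Metric.infDist (x (k+1)) {y | f (k+1) y = fstar (k+1)})^2) :=
    Filter.isCoboundedUnder_le_of_le Filter.atTop (x := 0) (fun k => by positivity)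
  by_cases hμL : μ ≤ L
  · -- main case
    have hstep : ∀ k, f (k+1) (x (k+1)) - fstar (k+1) ≤
        (1 - α * m) * (f k (x k) - fstar k) + (α / c * fstar k + (η₀ + ηs)) := by
      intro k
      have h1 := descent_aux (f k) L (hdiff k) (hLip k) (x k) (-(α • (gradient (f k) (x k) + ε k)))
      rw [← sub_eq_add_neg, ← hx k, norm_neg, norm_smul, Real.norm_of_nonneg hα.le,
        inner_neg_right, inner_smul_right, inner_add_right, real_inner_self_eq_norm_sq] at h1
      have h2 := norm_add_sq_real (gradient (f k) (x k)) (ε k)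
      have h3 := hPL k (x k)
      have h4 := hεbound k
      have h5 := (abs_le.1 (hdrift k (x (k+1)))).2
      have h6 := (abs_le.1 (hdrifts k)).2
      set G := ‖gradient (f k) (x k)‖
      set E := ‖ε k‖
      set P := ‖gradient (f k) (x k) + ε k‖
      have h7 : L / 2 * (α * P) ^ 2 ≤ α / 2 * P ^ 2 := by
        have : 0 ≤ α / 2 * P ^ 2 := by positivity
        nlinarith
      have h8 : α / 2 * E ^ 2 ≤ α / c * f k (x k) := by
        have := mul_le_mul_of_nonneg_left h4 (show 0 ≤ α / c by positivity)
        calc α / 2 * E ^ 2 = α / c * (c / 2 * E ^ 2) := by field_simp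
          _ ≤ _ := this
      have h9 := mul_le_mul_of_nonneg_left h3 hα.le
      have h10 : α * m = α * μ - α / c := by rw [hm]; ring
      rw [h10]
      rw [h2] at h7
      nlinarith
    have hq0 : 0 ≤ 1 - α * m := by
      have : m ≤ L := by
        have : 0 < 1 / c := by positivity
        linarith
      nlinarith
    have hq1 : 1 - α * m < 1 := by
      have := mul_pos hα hm'
      linarith
    have hmain : ∀ e : ℝ, 0 < e → Filter.limsup
        (fun k => (1/2) * (Metric.infDist (x (k+1)) {y | f (k+1) y = fstar (k+1)})^2)
        Filter.atTop ≤ (F / m + (η₀ + ηs) / (α * μ * m)) + e * (1 / m + 1 / μ) := by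
      intro e he
      have hev : ∀ᶠ k in Filter.atTop, fstar k < F + e :=
        Filter.eventually_lt_of_limsup_lt (by linarith) hbdd
      have hrec := rec_aux (fun k => f k (x k) - fstar k) (1 - α * m)
        (α / c * (F + e) + (η₀ + ηs)) e hq0 hq1 he (by
          filter_upwards [hev] with k hk
          have h1 := hstep k
          have h2 := mul_le_mul_of_nonneg_left hk.le (show 0 ≤ α / c by positivity)
          linarith)
      refine Filter.limsup_le_of_le hu ?_
      filter_upwards [(Filter.tendsto_add_atTop_nat 1).eventually hrec] with k hk
      have h1 := qg_aux (f (k+1)) L μ (fstar (k+1)) hL hμ (hdiff _) (hLip _) (hlb _) (hPL _)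
        (x (k+1))
      have h2 := h1.trans hk
      rw [mul_comm, ← le_div_iff₀ hμ] at h2
      refine h2.trans ?_
      have h3 : ((α / c * (F + e) + (η₀ + ηs)) / (1 - (1 - α * m)) + e) / μ
          = (F + e) / m * (1 / (c * μ)) + (η₀ + ηs) / (α * μ * m) + e * (1 / μ) := by
        have : 1 - (1 - α * m) = α * m := by ring
        rw [this]
        have hm0 := hm'.ne'
        clear_value m
        field_simp
      rw [h3]
      have h4 : (F + e) / m * (1 / (c * μ)) ≤ (F + e) / m := by
        apply mul_le_of_le_one_right (by positivity)
        rw [div_le_one (by positivity)]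
        exact hcμ.le
      have h5 : (F + e) / m = F / m + e * (1 / m) := by ring
      linarith
    have hC : 0 < 1 / m + 1 / μ := by positivity
    apply le_of_forall_pos_le_add
    intro e he
    have := hmain (e / (1 / m + 1 / μ)) (by positivity)
    rwa [div_mul_cancel₀ _ hC.ne'] at this
  · push Not at hμL
    have hconst : ∀ k y, f k y = fstar k := by
      intro k y
      have h1 := descent_aux (f k) L (hdiff k) (hLip k) y (-((1 / L) • gradient (f k) y))
      rw [norm_neg, norm_smul, Real.norm_of_nonneg (by positivity), inner_neg_right,
        inner_smul_right, real_inner_self_eq_norm_sq] at h1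
      have h2 := hlb k (y + -((1 / L) • gradient (f k) y))
      have h3 := hPL k y
      have h4 := hlb k y
      set G := ‖gradient (f k) y‖
      have h5 : L / 2 * (1 / L * G) ^ 2 = 1 / L * (1 / 2 * G ^ 2) := by field_simp
      have h6 : 1 / L * (1 / 2 * G ^ 2) ≤ f k y - fstar k := by linarith
      rw [div_mul_eq_mul_div, one_mul, div_le_iff₀ hL] at h6
      nlinarith
    refine Filter.limsup_le_of_le hu (Filter.Eventually.of_forall fun k => ?_)
    have h0 : Metric.infDist (x (k+1)) {y | f (k+1) y = fstar (k+1)} = 0 :=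
      Metric.infDist_zero_of_mem (hconst _ _)
    simp only [h0]
    have : 0 ≤ F / m + (η₀ + ηs) / (α * μ * m) := by positivity
    simpa using this
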